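/- Let ε, γ > 0 with ε ≤ 1/100 and γ ≥ 10ε, and let n and d satisfy εd ≥ 10^4·log n. Let G be a graph on at most n vertices such that d ≤ d_G(v) ≤ (1+γ)d for each vertex v ∈ V(G). Let A ⊆ V(G) be chosen by including each vertex of G independently at random with probability 1−ε. Then, with probability at least 1 − 1/n^2, G contains a subgraph G' such that A ⊆ V(G') and, for some d' with (1−2ε)d ≤ d' ≤ d, every vertex v ∈ V(G') satisfies d' ≤ d_{G'}(v) ≤ (1−ε/2)(1+γ)d'. -/

import Mathlib

/-- The probability, under the distribution of a `p`-random subset of `Fin N`, of `E`. -/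
noncomputable def bernoulliProb (N : ℕ) (p : ℝ) (E : Set (Finset (Fin N))) : ℝ :=
  ∑ S : Finset (Fin N),
    E.indicator (fun A => p ^ A.card * (1 - p) ^ (N - A.card)) S

/-!
Call a vertex heavy if its degree is at least `(1 + γ)(1 - 2ε)d`, and light otherwise. Delete each
edge with probability `ε` times the number of its heavy ends, and delete the light vertices outside
`A`. Every neighbour of a vertex `v` of degree `k` is lost with probability about `ε`: a heavy one
through the deletion of the edge to it, a light one through the deletion of the vertex itself. If
`v` is heavy, it loses about `εk` further edges on its own account. So light degrees shrink by a
factor of about `1 - ε` and heavy ones by about `1 - 2ε`; since `γ ≥ 10ε`, the heavy degrees stay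
large enough, and all degrees end up in the required window above `d' = (1 - 6ε/5)d`.

The edge deletions do not involve `A`, so a good set of deleted edges is fixed in advance by the
probabilistic method. After that `A` only has to satisfy one concentration event per vertex, and
Chernoff's inequality with the union bound applies.
-/

open Finset

section RandomSubset

variable {ι : Type*} [Fintype ι] [DecidableEq ι] {p : ι → ℝ}

/-- The probability that a random subset of `ι`, containing each `i` independently with
probability `p i`, equals `S`. -/
noncomputable def bernoulliWeight (p : ι → ℝ) (S : Finset ι) : ℝ :=
  (∏ i ∈ S, p i) * ∏ i ∈ Sᶜ, (1 - p i)

/-- The probability of `E` for a random subset of `ι` that contains each `i` independently with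
probability `p i`. -/
noncomputable def randomSubsetProb (p : ι → ℝ) (E : Set (Finset ι)) : ℝ :=
  ∑ S, E.indicator (bernoulliWeight p) S

lemma bernoulliProb_eq_randomSubsetProb (N : ℕ) (q : ℝ) (E : Set (Finset (Fin N))) :
    bernoulliProb N q E = randomSubsetProb (fun _ ↦ q) E := by
  have hweight : (fun S : Finset (Fin N) ↦ q ^ #S * (1 - q) ^ (N - #S)) =
      bernoulliWeight fun _ ↦ q := by
    funext S
    simp only [bernoulliWeight, prod_const, card_compl, Fintype.card_fin]
  rw [bernoulliProb, hweight, randomSubsetProb]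

lemma bernoulliWeight_nonneg (h0 : 0 ≤ p) (h1 : p ≤ 1) (S : Finset ι) :
    0 ≤ bernoulliWeight p S :=
  mul_nonneg (prod_nonneg fun i _ ↦ h0 i) (prod_nonneg fun i _ ↦ sub_nonneg.2 (h1 i))

lemma sum_bernoulliWeight_mul_prod (p f : ι → ℝ) :
    ∑ S, bernoulliWeight p S * ∏ i ∈ S, f i = ∏ i, (p i * f i + (1 - p i)) := by
  rw [prod_add, powerset_univ]
  refine sum_congr rfl fun S _ ↦ ?_
  rw [bernoulliWeight, prod_mul_distrib, ← compl_eq_univ_sdiff]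
  ring

lemma sum_bernoulliWeight (p : ι → ℝ) : ∑ S, bernoulliWeight p S = 1 := by
  simpa using sum_bernoulliWeight_mul_prod p 1

lemma bernoulliWeight_one_sub_compl (p : ι → ℝ) (S : Finset ι) :
    bernoulliWeight (1 - p) Sᶜ = bernoulliWeight p S := by
  simp [bernoulliWeight, mul_comm]

lemma randomSubsetProb_nonneg (h0 : 0 ≤ p) (h1 : p ≤ 1) (E : Set (Finset ι)) :
    0 ≤ randomSubsetProb p E :=
  sum_nonneg fun _ _ ↦ Set.indicator_nonneg (fun S _ ↦ bernoulliWeight_nonneg h0 h1 S) _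

lemma randomSubsetProb_mono (h0 : 0 ≤ p) (h1 : p ≤ 1) {E E' : Set (Finset ι)} (h : E ⊆ E') :
    randomSubsetProb p E ≤ randomSubsetProb p E' :=
  sum_le_sum fun S _ ↦ Set.indicator_le_indicator_of_subset h (bernoulliWeight_nonneg h0 h1) S

lemma randomSubsetProb_compl (p : ι → ℝ) (E : Set (Finset ι)) :
    randomSubsetProb p Eᶜ = 1 - randomSubsetProb p E := by
  rw [eq_sub_iff_add_eq, randomSubsetProb, randomSubsetProb, ← sum_add_distrib,
    ← sum_bernoulliWeight p]
  exact sum_congr rfl fun S _ ↦ Set.indicator_compl_add_self_apply E _ S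

lemma randomSubsetProb_one_sub (p : ι → ℝ) (E : Set (Finset ι)) :
    randomSubsetProb (1 - p) {S | Sᶜ ∈ E} = randomSubsetProb p E := by
  refine Fintype.sum_equiv (compl_involutive.toPerm compl) _ _ fun S ↦ ?_
  have hweight := bernoulliWeight_one_sub_compl p Sᶜ
  rw [compl_compl] at hweight
  by_cases hS : Sᶜ ∈ E <;> simp [hS, hweight]

lemma nonempty_of_randomSubsetProb_pos {E : Set (Finset ι)} (h : 0 < randomSubsetProb p E) :
    E.Nonempty := by
  by_contra! hE
  simp [hE, randomSubsetProb] at h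

lemma randomSubsetProb_iUnion_le (h0 : 0 ≤ p) (h1 : p ≤ 1) {κ : Type*} [Fintype κ]
    (E : κ → Set (Finset ι)) :
    randomSubsetProb p (⋃ k, E k) ≤ ∑ k, randomSubsetProb p (E k) := by
  simp only [randomSubsetProb]
  rw [sum_comm]
  refine sum_le_sum fun S _ ↦ ?_
  have hnonneg (k : κ) : 0 ≤ (E k).indicator (bernoulliWeight p) S :=
    Set.indicator_nonneg (fun S _ ↦ bernoulliWeight_nonneg h0 h1 S) S
  refine Set.indicator_apply_le' (fun hS ↦ ?_) fun _ ↦ sum_nonneg fun k _ ↦ hnonneg k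
  obtain ⟨k, hk⟩ := Set.mem_iUnion.1 hS
  rw [← Set.indicator_of_mem hk (bernoulliWeight p)]
  exact single_le_sum (fun k _ ↦ hnonneg k) (mem_univ k)

lemma randomSubsetProb_union_le (h0 : 0 ≤ p) (h1 : p ≤ 1) (E E' : Set (Finset ι)) :
    randomSubsetProb p (E ∪ E') ≤ randomSubsetProb p E + randomSubsetProb p E' := by
  rw [Set.union_eq_iUnion]
  simpa using randomSubsetProb_iUnion_le h0 h1 fun b : Bool ↦ cond b E E'

lemma randomSubsetProb_setOf_le_le_sum_exp (h0 : 0 ≤ p) (h1 : p ≤ 1) (X : Finset ι → ℝ) (a : ℝ) :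
    randomSubsetProb p {S | a ≤ X S} ≤
      (∑ S, bernoulliWeight p S * Real.exp (X S)) * Real.exp (-a) := by
  rw [sum_mul]
  refine sum_le_sum fun S _ ↦ ?_
  have hw := bernoulliWeight_nonneg h0 h1 S
  refine Set.indicator_apply_le' (fun hS ↦ ?_) fun _ ↦ by positivity
  rw [mul_assoc, ← Real.exp_add]
  exact le_mul_of_one_le_right hw (Real.one_le_exp (by linarith [hS.out]))

lemma sum_bernoulliWeight_mul_exp_card_inter (p : ι → ℝ) (T : Finset ι) (l : ℝ) :
    ∑ S, bernoulliWeight p S * Real.exp (l * #(S ∩ T)) =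
      ∏ i ∈ T, (1 + p i * (Real.exp l - 1)) := by
  have hexp (S : Finset ι) :
      Real.exp (l * #(S ∩ T)) = ∏ i ∈ S, if i ∈ T then Real.exp l else 1 := by
    rw [prod_ite_mem, prod_const, ← Real.exp_nat_mul, mul_comm]
  simp only [hexp, sum_bernoulliWeight_mul_prod]
  rw [← prod_subset (subset_univ T) fun i _ hi ↦ by simp [hi]]
  refine prod_congr rfl fun i hi ↦ ?_
  rw [if_pos hi]
  ring

lemma sum_bernoulliWeight_mul_exp_card_inter_le (h0 : 0 ≤ p) (h1 : p ≤ 1) (T : Finset ι) {l : ℝ}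
    (hl : |l| ≤ 1) :
    ∑ S, bernoulliWeight p S * Real.exp (l * #(S ∩ T)) ≤
      Real.exp ((l + l ^ 2) * ∑ i ∈ T, p i) := by
  rw [sum_bernoulliWeight_mul_exp_card_inter, mul_sum, Real.exp_sum]
  refine prod_le_prod (fun i _ ↦ ?_) fun i _ ↦ ?_
  · have : 0 ≤ p i * Real.exp l := mul_nonneg (h0 i) (Real.exp_pos l).le
    linarith [show p i ≤ 1 from h1 i]
  · have hexp : Real.exp l - 1 ≤ l + l ^ 2 := by
      linarith [(abs_le.1 (Real.abs_exp_sub_one_sub_id_le hl)).2]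
    calc 1 + p i * (Real.exp l - 1) ≤ (l + l ^ 2) * p i + 1 := by
          linarith [mul_le_mul_of_nonneg_left hexp (h0 i)]
      _ ≤ Real.exp ((l + l ^ 2) * p i) := Real.add_one_le_exp _

lemma randomSubsetProb_le_mul_card_inter_sub_le (h0 : 0 ≤ p) (h1 : p ≤ 1) (T : Finset ι) {l : ℝ}
    (hl : |l| ≤ 1) (a : ℝ) :
    randomSubsetProb p {S | a ≤ l * (#(S ∩ T) - ∑ i ∈ T, p i)} ≤
      Real.exp (l ^ 2 * ∑ i ∈ T, p i - a) := by
  set μ := ∑ i ∈ T, p i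
  calc randomSubsetProb p {S | a ≤ l * (#(S ∩ T) - μ)}
      = randomSubsetProb p {S | a + l * μ ≤ l * #(S ∩ T)} := by
        simp only [mul_sub, le_sub_iff_add_le]
    _ ≤ _ := randomSubsetProb_setOf_le_le_sum_exp h0 h1 _ _
    _ ≤ Real.exp ((l + l ^ 2) * μ) * Real.exp (-(a + l * μ)) := by
        gcongr
        exact sum_bernoulliWeight_mul_exp_card_inter_le h0 h1 T hl
    _ = Real.exp (l ^ 2 * μ - a) := by
        rw [← Real.exp_add]
        ring_nf

lemma randomSubsetProb_lt_abs_card_inter_sub_le (h0 : 0 ≤ p) (h1 : p ≤ 1) {T : Finset ι}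
    {M δ : ℝ} (hδ0 : 0 ≤ δ) (hδ : δ ≤ 2) (hM : ∑ i ∈ T, p i ≤ M) :
    randomSubsetProb p {S | δ * M < |#(S ∩ T) - ∑ i ∈ T, p i|} ≤
      2 * Real.exp (-(δ ^ 2 * M / 4)) := by
  set μ := ∑ i ∈ T, p i
  have tail (l : ℝ) (hl : |l| = δ / 2) :
      randomSubsetProb p {S | δ ^ 2 * M / 2 ≤ l * (#(S ∩ T) - μ)} ≤
        Real.exp (-(δ ^ 2 * M / 4)) := by
    refine (randomSubsetProb_le_mul_card_inter_sub_le h0 h1 T (by linarith) _).trans ?_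
    rw [← sq_abs l, hl, Real.exp_le_exp]
    linarith [mul_le_mul_of_nonneg_left hM (sq_nonneg (δ / 2))]
  have hcover : {S : Finset ι | δ * M < |#(S ∩ T) - μ|} ⊆
      {S | δ ^ 2 * M / 2 ≤ δ / 2 * (#(S ∩ T) - μ)} ∪
        {S | δ ^ 2 * M / 2 ≤ -(δ / 2) * (#(S ∩ T) - μ)} := by
    intro S hS
    have scale {x : ℝ} (hx : δ * M < x) : δ ^ 2 * M / 2 ≤ δ / 2 * x := by
      linarith [mul_le_mul_of_nonneg_left hx.le (show 0 ≤ δ / 2 by positivity)]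
    rcases lt_abs.1 hS.out with h | h
    · exact .inl (scale h)
    · exact .inr ((scale h).trans_eq (by ring))
  have habs : |δ / 2| = δ / 2 := abs_of_nonneg (by positivity)
  linarith [randomSubsetProb_mono h0 h1 hcover, tail (δ / 2) habs,
    tail (-(δ / 2)) ((abs_neg _).trans habs), randomSubsetProb_union_le h0 h1
      {S | δ ^ 2 * M / 2 ≤ δ / 2 * (#(S ∩ T) - μ)} {S | δ ^ 2 * M / 2 ≤ -(δ / 2) * (#(S ∩ T) - μ)}]

lemma one_sub_sum_le_randomSubsetProb_forall (h0 : 0 ≤ p) (h1 : p ≤ 1) {κ : Type*} [Fintype κ]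
    {T : κ → Finset ι} {M : κ → ℝ} {δ : ℝ} (hδ0 : 0 ≤ δ) (hδ : δ ≤ 2)
    (hM : ∀ k, ∑ i ∈ T k, p i ≤ M k) :
    1 - ∑ k, 2 * Real.exp (-(δ ^ 2 * M k / 4)) ≤
      randomSubsetProb p {S | ∀ k, |#(S ∩ T k) - ∑ i ∈ T k, p i| ≤ δ * M k} := by
  set bad : κ → Set (Finset ι) := fun k ↦ {S | δ * M k < |#(S ∩ T k) - ∑ i ∈ T k, p i|}
  have hgood : {S | ∀ k, |#(S ∩ T k) - ∑ i ∈ T k, p i| ≤ δ * M k} = (⋃ k, bad k)ᶜ := by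
    ext S
    simp [bad]
  rw [hgood, randomSubsetProb_compl]
  gcongr
  exact (randomSubsetProb_iUnion_le h0 h1 bad).trans
    (sum_le_sum fun k _ ↦ randomSubsetProb_lt_abs_card_inter_sub_le h0 h1 hδ0 hδ (hM k))

lemma two_mul_exp_neg_le_one_div_pow {n : ℕ} (hn : 2 ≤ n) {x : ℝ} (hx : 4 * Real.logb 2 n ≤ x) :
    2 * Real.exp (-x) ≤ 1 / (n : ℝ) ^ 3 := by
  have hn2 : (2 : ℝ) ≤ n := by exact_mod_cast hn
  have hlog : Real.log n ≤ Real.logb 2 n := by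
    refine le_div_self (Real.log_nonneg (by linarith)) (Real.log_pos one_lt_two) ?_
    linarith [Real.log_two_lt_d9]
  calc 2 * Real.exp (-x) ≤ n * Real.exp (-((4 : ℕ) * Real.log n)) := by
        gcongr
        push_cast
        linarith
    _ = 1 / (n : ℝ) ^ 3 := by
        rw [Real.exp_neg, Real.exp_nat_mul, Real.exp_log (by linarith)]
        field_simp

lemma one_sub_le_randomSubsetProb_concentrated (h0 : 0 ≤ p) (h1 : p ≤ 1) {κ : Type*} [Fintype κ]
    {n : ℕ} (hn : n ≠ 1) (hκ : Fintype.card κ ≤ n) {T : κ → Finset ι} {M : κ → ℝ}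
    (hM : ∀ k, ∑ i ∈ T k, p i ≤ M k) (hlog : ∀ k, 10 ^ 4 * Real.logb 2 n ≤ M k) :
    1 - 1 / (n : ℝ) ^ 2 ≤
      randomSubsetProb p {S | ∀ k, |#(S ∩ T k) - ∑ i ∈ T k, p i| ≤ 1 / 20 * M k} := by
  refine le_trans ?_ (one_sub_sum_le_randomSubsetProb_forall h0 h1 (by norm_num) (by norm_num) hM)
  gcongr
  have hfail (k : κ) : 2 * Real.exp (-((1 / 20) ^ 2 * M k / 4)) ≤ 1 / (n : ℝ) ^ 3 := by
    have : 0 < Fintype.card κ := Fintype.card_pos_iff.2 ⟨k⟩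
    have : 0 ≤ Real.logb 2 n := Real.logb_nonneg one_lt_two (by exact_mod_cast (by omega : 1 ≤ n))
    exact two_mul_exp_neg_le_one_div_pow (by omega) (by linarith [hlog k])
  calc ∑ k, 2 * Real.exp (-((1 / 20) ^ 2 * M k / 4)) ≤ Fintype.card κ * (1 / (n : ℝ) ^ 3) := by
        simpa using sum_le_sum fun k (_ : k ∈ univ) ↦ hfail k
    _ ≤ n * (1 / (n : ℝ) ^ 3) := by gcongr
    _ = 1 / (n : ℝ) ^ 2 := by
        rcases eq_or_ne n 0 with rfl | hn0
        · simp
        · field_simp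

lemma one_sub_le_randomSubsetProb_compl_concentrated {ε : ℝ} (hε0 : 0 ≤ ε) (hε : ε ≤ 1)
    {κ : Type*} [Fintype κ] {n : ℕ} (hn : n ≠ 1) (hκ : Fintype.card κ ≤ n) {T : κ → Finset ι}
    {M : κ → ℝ} (hM : ∀ k, ε * #(T k) ≤ M k) (hlog : ∀ k, 10 ^ 4 * Real.logb 2 n ≤ M k) :
    1 - 1 / (n : ℝ) ^ 2 ≤ randomSubsetProb (fun _ : ι ↦ 1 - ε)
      {A | ∀ k, |#(Aᶜ ∩ T k) - ε * #(T k)| ≤ 1 / 20 * M k} := by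
  have hmean (k : κ) : ∑ _i ∈ T k, ε = ε * #(T k) := by rw [sum_const, nsmul_eq_mul, mul_comm]
  simp only [← hmean] at hM ⊢
  refine (one_sub_le_randomSubsetProb_concentrated (fun _ ↦ hε0) (fun _ ↦ hε) hn hκ hM
    hlog).trans_eq ?_
  rw [← randomSubsetProb_one_sub]
  rfl

end RandomSubset

section Pruning

variable {V : Type*} [DecidableEq V] {H A : Finset V} {F : Finset (Sym2 V)} {v : V} {ε γ d : ℝ}

/-- The probability with which the edge `e` is deleted when `H` is the set of heavy vertices:
`ε` for each heavy end. -/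
def edgeDeletionProb (H : Finset V) (ε : ℝ) (e : Sym2 V) : ℝ :=
  ε * #{x ∈ H | x ∈ e}

lemma edgeDeletionProb_nonneg (hε : 0 ≤ ε) : 0 ≤ edgeDeletionProb H ε :=
  fun _ ↦ mul_nonneg hε (Nat.cast_nonneg _)

lemma card_filter_mem_sym2_le_two (H : Finset V) (e : Sym2 V) : #{x ∈ H | x ∈ e} ≤ 2 := by
  induction e with
  | _ a b =>
    refine (card_le_card fun x hx ↦ ?_).trans (card_le_two (a := a) (b := b))
    simpa using (mem_filter.1 hx).2

lemma edgeDeletionProb_le_one (hε : ε ≤ 1 / 2) : edgeDeletionProb H ε ≤ 1 := by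
  intro e
  have hcard : (#{x ∈ H | x ∈ e} : ℝ) ≤ 2 := by exact_mod_cast card_filter_mem_sym2_le_two H e
  calc ε * #{x ∈ H | x ∈ e} ≤ 1 / 2 * 2 := by gcongr
    _ = 1 := by norm_num

lemma edgeDeletionProb_mk_of_ne {u : V} (h : v ≠ u) :
    edgeDeletionProb H ε s(v, u) = (if v ∈ H then ε else 0) + if u ∈ H then ε else 0 := by
  have hends : ({x ∈ H | x ∈ s(v, u)} : Finset V) = ({v, u} : Finset V).filter (· ∈ H) := by
    ext x
    simp [and_comm]
  rw [edgeDeletionProb, hends, filter_insert, filter_singleton]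
  split_ifs <;> simp [h]
  ring

variable [Fintype V] (G : SimpleGraph V) [DecidableRel G.Adj]

/-- The light (that is, not in `H`) neighbours of `v` along edges that survive the deletion
of `F`. -/
def lightNeighbors (H : Finset V) (F : Finset (Sym2 V)) (v : V) : Finset V :=
  {u ∈ G.neighborFinset v | s(v, u) ∉ F ∧ u ∉ H}

/-- The subgraph of `G` on the vertex set `W` with the edges in `F` removed. -/
def prunedSubgraph (W : Finset V) (F : Finset (Sym2 V)) : G.Subgraph :=
  ((⊤ : G.Subgraph).induce W).deleteEdges F

lemma incidenceFinset_eq_image_neighborFinset (v : V) :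
    G.incidenceFinset v = (G.neighborFinset v).image (s(v, ·)) := by
  ext e
  induction e with
  | _ a b =>
    simp only [SimpleGraph.mem_incidenceFinset, SimpleGraph.mk'_mem_incidenceSet_iff, mem_image,
      SimpleGraph.mem_neighborFinset, Sym2.eq_iff]
    grind [G.adj_comm]

lemma sum_edgeDeletionProb_incidenceFinset (H : Finset V) (ε : ℝ) (v : V) :
    ∑ e ∈ G.incidenceFinset v, edgeDeletionProb H ε e =
      (if v ∈ H then ε else 0) * G.degree v + ε * #{u ∈ G.neighborFinset v | u ∈ H} := by
  rw [incidenceFinset_eq_image_neighborFinset,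
    sum_image fun _ _ _ _ h ↦ Sym2.congr_right.1 h,
    sum_congr rfl fun u hu ↦ edgeDeletionProb_mk_of_ne ((G.mem_neighborFinset v u).1 hu).ne,
    sum_add_distrib, sum_const, ← sum_filter, sum_const, nsmul_eq_mul, nsmul_eq_mul,
    G.card_neighborFinset_eq_degree, mul_comm, mul_comm ε]

lemma sum_edgeDeletionProb_incidenceFinset_le (H : Finset V) (hε : 0 ≤ ε) (v : V) :
    ∑ e ∈ G.incidenceFinset v, edgeDeletionProb H ε e ≤ 2 * ε * G.degree v := by
  have hself : (if v ∈ H then ε else 0) ≤ ε := by split_ifs <;> linarith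
  have hnbr : (#{u ∈ G.neighborFinset v | u ∈ H} : ℝ) ≤ G.degree v := by
    exact_mod_cast card_filter_le _ _
  calc _ = _ := sum_edgeDeletionProb_incidenceFinset G H ε v
    _ ≤ ε * G.degree v + ε * G.degree v := by gcongr
    _ = 2 * ε * G.degree v := by ring

lemma card_inter_incidenceFinset (F : Finset (Sym2 V)) (v : V) :
    #(F ∩ G.incidenceFinset v) = #{u ∈ G.neighborFinset v | s(v, u) ∈ F} := by
  rw [incidenceFinset_eq_image_neighborFinset, inter_comm, ← filter_mem_eq_inter, filter_image,
    card_image_of_injective _ fun _ _ h ↦ Sym2.congr_right.1 h]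

lemma card_lightNeighbors_le (H : Finset V) (F : Finset (Sym2 V)) (v : V) :
    #(lightNeighbors G H F v) ≤ G.degree v :=
  card_filter_le _ _

lemma card_heavy_add_card_lightNeighbors_le (H : Finset V) (F : Finset (Sym2 V)) (v : V) :
    #{u ∈ G.neighborFinset v | u ∈ H} + #(lightNeighbors G H F v) ≤ G.degree v := by
  rw [lightNeighbors, ← card_union_of_disjoint]
  · exact card_le_card (union_subset (filter_subset _ _) (filter_subset _ _))
  · exact disjoint_filter.2 fun u _ hu h ↦ h.2 hu

lemma degree_le_card_heavy_add_card_lightNeighbors (H : Finset V) (F : Finset (Sym2 V)) (v : V) :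
    G.degree v ≤ #{u ∈ G.neighborFinset v | u ∈ H} + #(lightNeighbors G H F v) +
      #(F ∩ G.incidenceFinset v) := by
  rw [card_inter_incidenceFinset, lightNeighbors, ← G.card_neighborFinset_eq_degree]
  refine (card_le_card fun u hu ↦ ?_).trans
    ((card_union_le _ _).trans (Nat.add_le_add_right (card_union_le _ _) _))
  simp only [mem_union, mem_filter]
  tauto

lemma ncard_neighborSet_prunedSubgraph (hv : v ∈ A ∪ H) :
    ((prunedSubgraph G (A ∪ H) F).neighborSet v).ncard + #(F ∩ G.incidenceFinset v) +
      #(Aᶜ ∩ lightNeighbors G H F v) = G.degree v := by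
  have hkept : (prunedSubgraph G (A ∪ H) F).neighborSet v =
      ({u ∈ G.neighborFinset v | s(v, u) ∉ F ∧ u ∈ A ∪ H} : Finset V) := by
    ext u
    simp only [prunedSubgraph, SimpleGraph.Subgraph.mem_neighborSet,
      SimpleGraph.Subgraph.deleteEdges_adj, SimpleGraph.Subgraph.induce_adj,
      SimpleGraph.Subgraph.top_adj, mem_coe, mem_filter, SimpleGraph.mem_neighborFinset]
    tauto
  have hlost : Aᶜ ∩ lightNeighbors G H F v =
      {u ∈ G.neighborFinset v | s(v, u) ∉ F ∧ u ∉ A ∪ H} := by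
    ext u
    simp only [lightNeighbors, mem_inter, mem_compl, mem_filter, mem_union]
    tauto
  rw [hkept, Set.ncard_coe_finset, hlost, card_inter_incidenceFinset, add_right_comm,
    ← filter_filter, ← filter_filter, card_filter_add_card_filter_not, add_comm,
    card_filter_add_card_filter_not, G.card_neighborFinset_eq_degree]

lemma abs_ncard_neighborSet_prunedSubgraph_sub_le (hε0 : 0 ≤ ε) (hε : ε ≤ 1 / 100)
    (hv : v ∈ A ∪ H)
    (hF : |#(F ∩ G.incidenceFinset v) - ∑ e ∈ G.incidenceFinset v, edgeDeletionProb H ε e| ≤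
      1 / 20 * (2 * ε * G.degree v))
    (hA : |#(Aᶜ ∩ lightNeighbors G H F v) - ε * #(lightNeighbors G H F v)| ≤
      1 / 20 * (ε * G.degree v)) :
    |(((prunedSubgraph G (A ∪ H) F).neighborSet v).ncard : ℝ) -
        (1 - ε - if v ∈ H then ε else 0) * G.degree v| ≤ 1 / 5 * (ε * G.degree v) := by
  have hdeleted : (#(F ∩ G.incidenceFinset v) : ℝ) ≤ 21 / 10 * ε * G.degree v := by
    linarith [sum_edgeDeletionProb_incidenceFinset_le G H hε0 v, (abs_le.1 hF).2]
  have hkept : (((prunedSubgraph G (A ∪ H) F).neighborSet v).ncard + #(F ∩ G.incidenceFinset v) +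
      #(Aᶜ ∩ lightNeighbors G H F v) : ℝ) = G.degree v := by
    exact_mod_cast ncard_neighborSet_prunedSubgraph G hv
  have hlower : (#{u ∈ G.neighborFinset v | u ∈ H} + #(lightNeighbors G H F v) : ℝ) ≤
      G.degree v := by
    exact_mod_cast card_heavy_add_card_lightNeighbors_le G H F v
  have hupper : (G.degree v : ℝ) ≤ #{u ∈ G.neighborFinset v | u ∈ H} +
      #(lightNeighbors G H F v) + #(F ∩ G.incidenceFinset v) := by
    exact_mod_cast degree_le_card_heavy_add_card_lightNeighbors G H F v
  rw [sum_edgeDeletionProb_incidenceFinset] at hF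
  set k := (G.degree v : ℝ)
  set h := (#{u ∈ G.neighborFinset v | u ∈ H} : ℝ)
  set t := (#(lightNeighbors G H F v) : ℝ)
  -- `k - h - t` counts the light neighbours of `v` across deleted edges: `hA` does not see them,
  -- but there are so few that an `ε`-fraction of them is negligible.
  have hunseen0 : 0 ≤ ε * (k - h - t) := mul_nonneg hε0 (by linarith)
  have hunseen : ε * (k - h - t) ≤ 1 / 20 * (ε * k) := by
    calc ε * (k - h - t) ≤ 1 / 100 * (21 / 10 * ε * k) :=
          mul_le_mul hε (by linarith) (by linarith) (by norm_num)
      _ ≤ 1 / 20 * (ε * k) := by linarith [mul_nonneg hε0 (Nat.cast_nonneg (G.degree v))]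
  rw [abs_le]
  constructor <;> linarith [abs_le.1 hF, abs_le.1 hA]

lemma light_degree_window {k x : ℝ} (hε0 : 0 ≤ ε) (hε : ε ≤ 1 / 100) (hγ : 0 ≤ γ) (hd : 0 ≤ d)
    (hdk : d ≤ k) (hk : k ≤ (1 + γ) * (1 - 2 * ε) * d) (hx : |x - (1 - ε) * k| ≤ 1 / 5 * (ε * k)) :
    (1 - 6 / 5 * ε) * d ≤ x ∧ x ≤ (1 - ε / 2) * (1 + γ) * ((1 - 6 / 5 * ε) * d) := by
  obtain ⟨hlower, hupper⟩ := abs_le.1 hx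
  constructor
  · calc (1 - 6 / 5 * ε) * d ≤ (1 - 6 / 5 * ε) * k :=
        mul_le_mul_of_nonneg_left hdk (by linarith)
      _ ≤ x := by linarith
  · calc x ≤ k := by linarith [mul_nonneg hε0 (hd.trans hdk)]
      _ ≤ (1 - 2 * ε) * ((1 + γ) * d) := by linarith
      _ ≤ (1 - ε / 2) * (1 - 6 / 5 * ε) * ((1 + γ) * d) := by
        gcongr
        nlinarith
      _ = _ := by ring

lemma heavy_degree_window {k x : ℝ} (hε0 : 0 ≤ ε) (hε : ε ≤ 1 / 100) (hγ : 10 * ε ≤ γ)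
    (hd : 0 ≤ d) (hk : (1 + γ) * (1 - 2 * ε) * d ≤ k) (hkd : k ≤ (1 + γ) * d)
    (hx : |x - (1 - 2 * ε) * k| ≤ 1 / 5 * (ε * k)) :
    (1 - 6 / 5 * ε) * d ≤ x ∧ x ≤ (1 - ε / 2) * (1 + γ) * ((1 - 6 / 5 * ε) * d) := by
  obtain ⟨hlower, hupper⟩ := abs_le.1 hx
  constructor
  · calc (1 - 6 / 5 * ε) * d ≤ (1 - 11 / 5 * ε) * ((1 + 10 * ε) * (1 - 2 * ε)) * d := by
          gcongr
          nlinarith [pow_nonneg hε0 3]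
      _ ≤ (1 - 11 / 5 * ε) * ((1 + γ) * (1 - 2 * ε)) * d := by
          gcongr <;> linarith
      _ ≤ (1 - 11 / 5 * ε) * k := by
          rw [mul_assoc]
          gcongr
          linarith
      _ ≤ x := by linarith
  · have hγd : 0 ≤ (1 + γ) * d := mul_nonneg (by linarith) hd
    calc x ≤ (1 - 9 / 5 * ε) * k := by linarith
      _ ≤ (1 - 9 / 5 * ε) * ((1 + γ) * d) := mul_le_mul_of_nonneg_left hkd (by linarith)
      _ ≤ (1 - ε / 2) * (1 - 6 / 5 * ε) * ((1 + γ) * d) := by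
        gcongr
        nlinarith
      _ = _ := by ring

lemma ncard_neighborSet_prunedSubgraph_window (hε0 : 0 ≤ ε) (hε : ε ≤ 1 / 100) (hγ : 10 * ε ≤ γ)
    (hd : 0 ≤ d) (hH : v ∈ H ↔ (1 + γ) * (1 - 2 * ε) * d ≤ G.degree v)
    (hdeg : d ≤ G.degree v ∧ G.degree v ≤ (1 + γ) * d) (hv : v ∈ A ∪ H)
    (hF : |#(F ∩ G.incidenceFinset v) - ∑ e ∈ G.incidenceFinset v, edgeDeletionProb H ε e| ≤
      1 / 20 * (2 * ε * G.degree v))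
    (hA : |#(Aᶜ ∩ lightNeighbors G H F v) - ε * #(lightNeighbors G H F v)| ≤
      1 / 20 * (ε * G.degree v)) :
    (1 - 6 / 5 * ε) * d ≤ ((prunedSubgraph G (A ∪ H) F).neighborSet v).ncard ∧
      ((prunedSubgraph G (A ∪ H) F).neighborSet v).ncard ≤
        (1 - ε / 2) * (1 + γ) * ((1 - 6 / 5 * ε) * d) := by
  have hkept := abs_ncard_neighborSet_prunedSubgraph_sub_le G hε0 hε hv hF hA
  by_cases hvH : v ∈ H
  · rw [if_pos hvH, show 1 - ε - ε = 1 - 2 * ε by ring] at hkept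
    exact heavy_degree_window hε0 hε hγ hd (hH.1 hvH) hdeg.2 hkept
  · rw [if_neg hvH, sub_zero] at hkept
    exact light_degree_window hε0 hε (by linarith) hd hdeg.1 (not_le.1 (hvH ∘ hH.2)).le hkept

lemma exists_edges_concentrated {n : ℕ} (hn : n ≠ 1) (hV : Fintype.card V ≤ n) (hε0 : 0 ≤ ε)
    (hε : ε ≤ 1 / 2) (H : Finset V) (hdeg : ∀ v, 10 ^ 4 * Real.logb 2 n ≤ ε * G.degree v) :
    ∃ F : Finset (Sym2 V), ∀ v,
      |#(F ∩ G.incidenceFinset v) - ∑ e ∈ G.incidenceFinset v, edgeDeletionProb H ε e| ≤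
        1 / 20 * (2 * ε * G.degree v) := by
  have hprob := one_sub_le_randomSubsetProb_concentrated (edgeDeletionProb_nonneg (H := H) hε0)
    (edgeDeletionProb_le_one hε) hn hV
    (sum_edgeDeletionProb_incidenceFinset_le G H hε0) fun v ↦ by
      linarith [hdeg v, mul_nonneg hε0 (Nat.cast_nonneg (α := ℝ) (G.degree v))]
  refine nonempty_of_randomSubsetProb_pos (lt_of_lt_of_le ?_ hprob)
  rcases eq_or_ne n 0 with rfl | hn0
  · simp
  · rw [sub_pos]
    have hn1 : (1 : ℝ) < n := by exact_mod_cast (by omega : 1 < n)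
    exact (div_lt_one (by positivity)).2 (one_lt_pow₀ hn1 two_ne_zero)

end Pruning

theorem statement7_general {V : Type*} [Fintype V] [DecidableEq V] (ε γ : ℝ) (hε0 : 0 < ε)
    (hε : ε ≤ 1 / 100) (hγ : 10 * ε ≤ γ) (n : ℕ) (hV : Fintype.card V ≤ n) (d : ℝ)
    (hd : 10 ^ 4 * Real.logb 2 n ≤ ε * d) (G : SimpleGraph V)
    (hdeg : ∀ v, d ≤ ((G.neighborSet v).ncard : ℝ) ∧
      ((G.neighborSet v).ncard : ℝ) ≤ (1 + γ) * d) :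
    1 - 1 / (n : ℝ) ^ 2 ≤ randomSubsetProb (fun _ : V ↦ 1 - ε)
      {A : Finset V | ∃ (G' : G.Subgraph) (d' : ℝ),
        (↑A : Set V) ⊆ G'.verts ∧
        (1 - 2 * ε) * d ≤ d' ∧ d' ≤ d ∧
        ∀ v ∈ G'.verts, d' ≤ ((G'.neighborSet v).ncard : ℝ) ∧
          ((G'.neighborSet v).ncard : ℝ) ≤ (1 - ε / 2) * (1 + γ) * d'} := by
  classical
  have hp0 : (0 : V → ℝ) ≤ fun _ ↦ 1 - ε := fun _ ↦ sub_nonneg.2 (by linarith)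
  have hp1 : (fun _ : V ↦ 1 - ε) ≤ 1 := fun _ ↦ sub_le_self _ hε0.le
  rcases eq_or_ne n 1 with rfl | hn
  · simpa using randomSubsetProb_nonneg hp0 hp1 _
  simp only [← Set.fintypeCard_eq_ncard, SimpleGraph.card_neighborSet_eq_degree] at hdeg
  have hlog0 : 0 ≤ Real.logb 2 n :=
    div_nonneg (Real.log_natCast_nonneg n) (Real.log_nonneg one_le_two)
  have hεd : 0 ≤ ε * d := by linarith
  have hd0 : 0 ≤ d := nonneg_of_mul_nonneg_right hεd hε0
  have hlog (v : V) : 10 ^ 4 * Real.logb 2 n ≤ ε * G.degree v :=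
    hd.trans (mul_le_mul_of_nonneg_left (hdeg v).1 hε0.le)
  set H : Finset V := {v | (1 + γ) * (1 - 2 * ε) * d ≤ G.degree v} with hH
  obtain ⟨F, hF⟩ := exists_edges_concentrated G hn hV hε0.le (by linarith) H hlog
  refine (one_sub_le_randomSubsetProb_compl_concentrated (T := lightNeighbors G H F) hε0.le
    (by linarith) hn hV (fun v ↦ ?_) hlog).trans ?_
  · exact mul_le_mul_of_nonneg_left (mod_cast card_lightNeighbors_le G H F v) hε0.le
  refine randomSubsetProb_mono hp0 hp1 fun A hA ↦ ⟨prunedSubgraph G (A ∪ H) F,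
    (1 - 6 / 5 * ε) * d, coe_subset.2 subset_union_left, by linarith, by linarith, fun v hv ↦ ?_⟩
  exact ncard_neighborSet_prunedSubgraph_window G hε0.le hε hγ hd0 (by simp [hH]) (hdeg v)
    (mem_coe.1 hv) (hF v) (hA v)

/-- Let `ε, γ > 0` with `ε ≤ 1/100` and `γ ≥ 10ε`, and let `n, d` satisfy
`εd ≥ 10⁴ log n`. Let `G` be a graph on at most `n` vertices with all degrees between `d`
and `(1+γ)d`, and let `A` be a `(1-ε)`-random subset of `V(G)`. Then with probability at
least `1 - 1/n²`, `G` has a subgraph `G'` with `A ⊆ V(G')` and, for some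
`(1-2ε)d ≤ d' ≤ d`, all degrees of `G'` between `d'` and `(1-ε/2)(1+γ)d'`. -/
theorem statement7 (ε γ : ℝ) (hε0 : 0 < ε) (hε : ε ≤ 1 / 100) (hγ0 : 0 < γ)
    (hγ : 10 * ε ≤ γ) (n N : ℕ) (hN : N ≤ n) (d : ℝ)
    (hd : 10 ^ 4 * Real.logb 2 n ≤ ε * d)
    (G : SimpleGraph (Fin N))
    (hdeg : ∀ v, d ≤ ((G.neighborSet v).ncard : ℝ) ∧
      ((G.neighborSet v).ncard : ℝ) ≤ (1 + γ) * d) :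
    1 - 1 / (n : ℝ) ^ 2 ≤ bernoulliProb N (1 - ε)
      {A : Finset (Fin N) | ∃ (G' : G.Subgraph) (d' : ℝ),
        (↑A : Set (Fin N)) ⊆ G'.verts ∧
        (1 - 2 * ε) * d ≤ d' ∧ d' ≤ d ∧
        ∀ v ∈ G'.verts, d' ≤ ((G'.neighborSet v).ncard : ℝ) ∧
          ((G'.neighborSet v).ncard : ℝ) ≤ (1 - ε / 2) * (1 + γ) * d'} := by
  rw [bernoulliProb_eq_randomSubsetProb]
  exact statement7_general ε γ hε0 hε hγ n (by simpa using hN) d hd G hdeg
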